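/- arXiv:2506.20669 — 2 statements merged into one kernel-verified Lean document; each statement's English description precedes it below -/
import Mathlib

section
/- If n and m are both odd, then the n × m Knight's grid minus the centre vertex ((n−1)/2, (m−1)/2) is opposable via (x,y) ↦ (n−x−1, m−y−1); hence the Knight's grid is almost opposable. -/
/-- An *opposition* of a simple graph `G`: an automorphism `f` of order two such that
`f v ∉ N[v]` for every vertex `v` (i.e. `f v ≠ v` and `f v` is not adjacent to `v`). -/
def IsOpposition {V : Type*} (G : SimpleGraph V) (f : V → V) : Prop :=
  (∀ u v, G.Adj u v ↔ G.Adj (f u) (f v)) ∧ (∀ v, f (f v) = v) ∧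
    ∀ v, f v ≠ v ∧ ¬ G.Adj v (f v)

/-- A graph is *opposable* if it admits an opposition. -/
def Opposable {V : Type*} (G : SimpleGraph V) : Prop := ∃ f, IsOpposition G f

/-- `f` is an opposition of the subgraph of `G` induced by the vertex set `S`. -/
def IsOppositionOn {V : Type*} (G : SimpleGraph V) (S : Set V) (f : V → V) : Prop :=
  (∀ v ∈ S, f v ∈ S) ∧ (∀ u ∈ S, ∀ v ∈ S, (G.Adj u v ↔ G.Adj (f u) (f v))) ∧
    (∀ v ∈ S, f (f v) = v) ∧ ∀ v ∈ S, f v ≠ v ∧ ¬ G.Adj v (f v)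

/-- A graph is *almost opposable* if deleting some admissible set `S`
(`u ∈ S ⊆ N[u]` for some vertex `u`) yields an opposable graph. -/
def AlmostOpposable {V : Type*} (G : SimpleGraph V) : Prop :=
  ∃ (u : V) (S : Set V), u ∈ S ∧ (∀ v ∈ S, v = u ∨ G.Adj u v) ∧
    ∃ f, IsOppositionOn G Sᶜ f

/-- The `n × m` Knight's grid. -/
def knightGrid (n m : ℕ) : SimpleGraph (Fin n × Fin m) :=
  SimpleGraph.fromRel fun p q =>
    (|(p.1 : ℤ) - (q.1 : ℤ)| = 1 ∧ |(p.2 : ℤ) - (q.2 : ℤ)| = 2) ∨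
    (|(p.1 : ℤ) - (q.1 : ℤ)| = 2 ∧ |(p.2 : ℤ) - (q.2 : ℤ)| = 1)

theorem knightGrid_adj_iff (n m : ℕ) (p q : Fin n × Fin m) : (knightGrid n m).Adj p q ↔
    ((|(p.1.val : ℤ) - (q.1.val : ℤ)| = 1 ∧ |(p.2.val : ℤ) - (q.2.val : ℤ)| = 2) ∨
    (|(p.1.val : ℤ) - (q.1.val : ℤ)| = 2 ∧ |(p.2.val : ℤ) - (q.2.val : ℤ)| = 1)) := by
  unfold knightGrid
  rw [SimpleGraph.fromRel_adj]
  constructor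
  · rintro ⟨_, h | h⟩
    · exact h
    · rw [abs_sub_comm (p.1.val : ℤ), abs_sub_comm (p.2.val : ℤ)]
      exact h
  · intro h
    refine ⟨?_, Or.inl h⟩
    rintro rfl
    simp at h

theorem knightGrid_odd_almostOpposable (n m : ℕ) (hn : Odd n) (hm : Odd m) :
    IsOppositionOn (knightGrid n m)
      {p | p ≠ (⟨(n - 1) / 2, by obtain ⟨a, ha⟩ := hn; omega⟩,
                ⟨(m - 1) / 2, by obtain ⟨a, ha⟩ := hm; omega⟩)}
      (fun p => (p.1.rev, p.2.rev)) ∧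
    AlmostOpposable (knightGrid n m) := by
  have key : IsOppositionOn (knightGrid n m)
      {p | p ≠ (⟨(n - 1) / 2, by obtain ⟨a, ha⟩ := hn; omega⟩,
                ⟨(m - 1) / 2, by obtain ⟨a, ha⟩ := hm; omega⟩)}
      (fun p => (p.1.rev, p.2.rev)) := by
    obtain ⟨a, rfl⟩ := hn
    obtain ⟨b, rfl⟩ := hm
    refine ⟨?_, ?_, ?_, ?_⟩
    · rintro ⟨⟨x, hx⟩, ⟨y, hy⟩⟩ h
      simp only [Set.mem_ofPred_eq, ne_eq, Prod.mk.injEq, Fin.ext_iff, Fin.val_rev] at h ⊢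
      omega
    · rintro ⟨⟨x, hx⟩, ⟨y, hy⟩⟩ _ ⟨⟨z, hz⟩, ⟨w, hw⟩⟩ _
      simp only [knightGrid_adj_iff, Fin.val_rev]
      have e1 : |((2 * a + 1 - (x + 1) : ℕ) : ℤ) - ((2 * a + 1 - (z + 1) : ℕ) : ℤ)|
          = |(x : ℤ) - z| := by
        rw [abs_sub_comm (x : ℤ)]; congr 1; omega
      have e2 : |((2 * b + 1 - (y + 1) : ℕ) : ℤ) - ((2 * b + 1 - (w + 1) : ℕ) : ℤ)|
          = |(y : ℤ) - w| := by
        rw [abs_sub_comm (y : ℤ)]; congr 1; omega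
      rw [e1, e2]
    · rintro ⟨x, y⟩ _
      simp
    · rintro ⟨⟨x, hx⟩, ⟨y, hy⟩⟩ h
      simp only [Set.mem_ofPred_eq, ne_eq, Prod.mk.injEq, Fin.ext_iff, Fin.val_rev,
        knightGrid_adj_iff] at h ⊢
      refine ⟨by omega, ?_⟩
      rintro (⟨h1, _⟩ | ⟨_, h1⟩) <;> rcases (abs_eq (by norm_num)).1 h1 with h1 | h1 <;> omega
  refine ⟨key, ?_⟩
  refine ⟨(⟨(n - 1) / 2, by obtain ⟨a, ha⟩ := hn; omega⟩,
    ⟨(m - 1) / 2, by obtain ⟨a, ha⟩ := hm; omega⟩), {_}, Set.mem_singleton _,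
    fun v hv => Or.inl hv, fun p => (p.1.rev, p.2.rev), ?_⟩
  exact key
end

section
/- If n and m are both odd, then deleting the closed neighbourhood of the centre vertex ((n−1)/2, (m−1)/2) from the n × m Bishop's grid yields a graph on which (x,y) ↦ (n−x−1, m−y−1) is an opposition; hence the Bishop's grid is almost opposable. -/
/-- The `n × m` Bishop's grid. -/
def bishopGrid (n m : ℕ) : SimpleGraph (Fin n × Fin m) :=
  SimpleGraph.fromRel fun p q =>
    |(p.1 : ℤ) - (q.1 : ℤ)| = |(p.2 : ℤ) - (q.2 : ℤ)|

theorem bishop_adj_iff (n m : ℕ) (p q : Fin n × Fin m) : (bishopGrid n m).Adj p q ↔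
    (¬ ((p.1 : ℤ) = q.1 ∧ (p.2 : ℤ) = q.2)) ∧
    ((p.1 : ℤ) - q.1 = p.2 - q.2 ∨ (p.1 : ℤ) - q.1 = -((p.2 : ℤ) - q.2)) := by
  obtain ⟨⟨a, ha⟩, ⟨b, hb⟩⟩ := p
  obtain ⟨⟨c, hc⟩, ⟨d, hd⟩⟩ := q
  simp only [bishopGrid, SimpleGraph.fromRel_adj, abs_eq_abs, ne_eq, Prod.mk.injEq, Fin.mk.injEq]
  omega

theorem bishopGrid_odd_almostOpposable (n m : ℕ) (hn : Odd n) (hm : Odd m) :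
    IsOppositionOn (bishopGrid n m)
      {p | ¬ (p = (⟨(n - 1) / 2, by obtain ⟨a, ha⟩ := hn; omega⟩,
                   ⟨(m - 1) / 2, by obtain ⟨a, ha⟩ := hm; omega⟩) ∨
              (bishopGrid n m).Adj
                (⟨(n - 1) / 2, by obtain ⟨a, ha⟩ := hn; omega⟩,
                 ⟨(m - 1) / 2, by obtain ⟨a, ha⟩ := hm; omega⟩) p)}
      (fun p => (p.1.rev, p.2.rev)) ∧
    AlmostOpposable (bishopGrid n m) := by
  have key : ∀ S : Set (Fin n × Fin m),
      (∀ p, p ∈ S ↔ ¬ (((n : ℤ) - 1 - 2 * p.1 = (m : ℤ) - 1 - 2 * p.2) ∨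
        ((n : ℤ) - 1 - 2 * p.1 = -((m : ℤ) - 1 - 2 * p.2)))) →
      IsOppositionOn (bishopGrid n m) S (fun p => (p.1.rev, p.2.rev)) := by
    intro S hS
    refine ⟨?_, ?_, ?_, ?_⟩
    · rintro ⟨⟨a, ha⟩, ⟨b, hb⟩⟩ h
      rw [hS] at h ⊢
      simp only [Fin.val_rev] at h ⊢
      omega
    · rintro ⟨⟨a, ha⟩, ⟨b, hb⟩⟩ _ ⟨⟨c, hc⟩, ⟨d, hd⟩⟩ _
      simp only [bishop_adj_iff, Fin.val_rev]
      omega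
    · intro v _
      simp
    · rintro ⟨⟨a, ha⟩, ⟨b, hb⟩⟩ h
      rw [hS] at h
      simp only [bishop_adj_iff, Fin.val_rev, ne_eq, Prod.mk.injEq, Fin.ext_iff] at h ⊢
      omega
  have main : ∀ (h1 : (n - 1) / 2 < n) (h2 : (m - 1) / 2 < m),
      IsOppositionOn (bishopGrid n m)
        {p | ¬ (p = (⟨(n - 1) / 2, h1⟩, ⟨(m - 1) / 2, h2⟩) ∨
          (bishopGrid n m).Adj (⟨(n - 1) / 2, h1⟩, ⟨(m - 1) / 2, h2⟩) p)}
        (fun p => (p.1.rev, p.2.rev)) := by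
    intro h1 h2
    apply key
    rintro ⟨⟨a, ha⟩, ⟨b, hb⟩⟩
    obtain ⟨k, rfl⟩ := hn
    obtain ⟨l, rfl⟩ := hm
    simp only [Set.mem_setOf_eq, bishop_adj_iff, Prod.mk.injEq, Fin.mk.injEq]
    omega
  have h1 : (n - 1) / 2 < n := by obtain ⟨a, ha⟩ := hn; omega
  have h2 : (m - 1) / 2 < m := by obtain ⟨a, ha⟩ := hm; omega
  refine ⟨main h1 h2, (⟨(n - 1) / 2, h1⟩, ⟨(m - 1) / 2, h2⟩),
    {p | p = (⟨(n - 1) / 2, h1⟩, ⟨(m - 1) / 2, h2⟩) ∨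
          (bishopGrid n m).Adj (⟨(n - 1) / 2, h1⟩, ⟨(m - 1) / 2, h2⟩) p},
    Or.inl rfl, fun v hv => hv, _, main h1 h2⟩
end
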